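/- arXiv:1002.4848 — 2 statements merged into one kernel-verified Lean document; each statement's English description precedes it below -/
import Mathlib

section
/- Weil reciprocity for the projective line: for nonzero rational functions f, g ∈ k(X)× over an algebraically closed field k, the product over all points p ∈ ℙ¹(k) (including ∞) of the tame symbols {f,g}_p equals 1, where all but finitely many factors are 1. -/
/-!
Both sides of the reciprocity law are multiplicative in `f` and in `g`, so it suffices to check
it on constants and on linear polynomials `X - a`, which generate `k(X)ˣ` since `k` is
algebraically closed.

The tame symbol as given evaluates one rational function of valuation `0`, so its
bimultiplicativity is not visible. For every point `p` there is a multiplicative leading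
coefficient `ℓ_p : k(X) → k`, the coefficient of lowest order in the Laurent expansion at `p`; it
agrees with evaluation at `p` on functions with `ν_p = 0`. Hence
`{f,g}_p = (-1)^(ν_p f ν_p g) ℓ_p(f)^(ν_p g) ℓ_p(g)^(-ν_p f)` (`tameAt_eq`, `tameInf_eq`), and this
expression (`symb`) is bimultiplicative and inverted by swapping `f` and `g`.

On the generators: `{c, X - b}` is `c` at `b` and `c⁻¹` at `∞`; for `a ≠ b`, `{X - a, X - b}` is
`(a - b)⁻¹` at `a`, `b - a` at `b` and `-1` at `∞`; `{X - a, X - a}` is `-1` at `a` and at `∞`.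
-/


/-- Order of vanishing of a nonzero rational function at a point `p`. -/
noncomputable def nuP {k : Type*} [Field k] (p : k) (f : RatFunc k) : ℤ :=
  (Polynomial.rootMultiplicity p f.num : ℤ) - (Polynomial.rootMultiplicity p f.denom : ℤ)

/-- The tame symbol `{f,g}_p` at a finite point `p ∈ 𝔸¹(k) ⊂ ℙ¹(k)`: the value at `p`
of `(-1)^(ν_p f ν_p g) f^(ν_p g) g^(-ν_p f)`. -/
noncomputable def tameAt {k : Type*} [Field k] (p : k) (f g : RatFunc k) : k :=
  RatFunc.eval (RingHom.id k) p
    ((-1 : RatFunc k) ^ (nuP p f * nuP p g) * f ^ (nuP p g) * g ^ (-(nuP p f)))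

/-- The valuation at `∞`: `ν_∞ f = -deg f`. -/
noncomputable def nuInf {k : Type*} [Field k] (f : RatFunc k) : ℤ := -f.intDegree

/-- The tame symbol `{f,g}_∞` at the point `∞ ∈ ℙ¹(k)`: the value at `∞` (ratio of top
coefficients) of `(-1)^(ν_∞ f ν_∞ g) f^(ν_∞ g) g^(-ν_∞ f)`, which has `ν_∞ = 0`. -/
noncomputable def tameInf {k : Type*} [Field k] (f g : RatFunc k) : k :=
  ((-1 : RatFunc k) ^ (nuInf f * nuInf g) * f ^ (nuInf g) * g ^ (-(nuInf f))).num.leadingCoeff /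
    ((-1 : RatFunc k) ^ (nuInf f * nuInf g) * f ^ (nuInf g) * g ^ (-(nuInf f))).denom.leadingCoeff

namespace WeilP1

open Polynomial

variable {k : Type*} [Field k]

/-- The lowest nonzero coefficient of the expansion of a polynomial in powers of `X - p`. -/
noncomputable def polyLead (p : k) : k[X] →*₀ k where
  toFun q := (taylor p q).trailingCoeff
  map_zero' := by simp
  map_one' := by simp [trailingCoeff]
  map_mul' a b := by rw [taylor_mul, trailingCoeff_mul]

lemma polyLead_ne_zero (p : k) {q : k[X]} (hq : q ≠ 0) : polyLead p q ≠ 0 := by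
  change (taylor p q).trailingCoeff ≠ 0
  rw [Ne, trailingCoeff_eq_zero]
  simpa using hq

lemma polyLead_eq_eval (p : k) {q : k[X]} (h : q.rootMultiplicity p = 0) :
    polyLead p q = q.eval p := by
  change (taylor p q).trailingCoeff = _
  rw [rootMultiplicity_eq_natTrailingDegree] at h
  rw [trailingCoeff, taylor_apply, h, ← taylor_apply, taylor_coeff_zero]

/-- The leading coefficient of a rational function at the finite point `p`, i.e. the lowest
nonzero coefficient of its Laurent expansion in `X - p`. -/
noncomputable def lead (p : k) : RatFunc k →*₀ k :=
  RatFunc.liftMonoidWithZeroHom (polyLead p) fun q hq => by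
    simpa using polyLead_ne_zero p (nonZeroDivisors.ne_zero hq)

lemma lead_apply (p : k) (f : RatFunc k) :
    lead p f = polyLead p f.num / polyLead p f.denom :=
  RatFunc.liftMonoidWithZeroHom_apply _ _ _

/-- The leading coefficient of a rational function at `∞`: the ratio of the top coefficients. -/
noncomputable def leadInf : RatFunc k →*₀ k :=
  RatFunc.liftMonoidWithZeroHom
    { toFun := leadingCoeff
      map_zero' := by simp
      map_one' := by simp
      map_mul' := leadingCoeff_mul } fun q hq => by
    exact mem_nonZeroDivisors_of_ne_zero (leadingCoeff_ne_zero.2 (nonZeroDivisors.ne_zero hq))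

lemma leadInf_apply (f : RatFunc k) :
    leadInf f = f.num.leadingCoeff / f.denom.leadingCoeff :=
  RatFunc.liftMonoidWithZeroHom_apply _ _ _

lemma nuP_mul (p : k) {f g : RatFunc k} (hf : f ≠ 0) (hg : g ≠ 0) :
    nuP p (f * g) = nuP p f + nuP p g := by
  have h := congrArg (rootMultiplicity p) (RatFunc.num_denom_mul f g)
  have hfn := RatFunc.num_ne_zero hf
  have hgn := RatFunc.num_ne_zero hg
  have hn := RatFunc.num_ne_zero (mul_ne_zero hf hg)
  have hfd := f.denom_ne_zero
  have hgd := g.denom_ne_zero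
  have hd := (f * g).denom_ne_zero
  rw [rootMultiplicity_mul (by simp [*]), rootMultiplicity_mul (by simp [*]),
    rootMultiplicity_mul (by simp [*]), rootMultiplicity_mul (by simp [*])] at h
  unfold nuP
  omega

lemma nuP_C (p c : k) : nuP p (algebraMap k[X] (RatFunc k) (C c)) = 0 := by
  simp [nuP]

/-- The valuation `ν_p` as a homomorphism on the unit group. -/
noncomputable def nuHom (p : k) : (RatFunc k)ˣ →* Multiplicative ℤ :=
  MonoidHom.mk' (fun f => Multiplicative.ofAdd (nuP p f)) fun f g => by
    rw [Units.val_mul, nuP_mul p f.ne_zero g.ne_zero, ofAdd_add]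

lemma nuP_zpow (p : k) {f : RatFunc k} (hf : f ≠ 0) (n : ℤ) :
    nuP p (f ^ n) = n * nuP p f := by
  have h := congrArg Multiplicative.toAdd (map_zpow (nuHom p) (Units.mk0 f hf) n)
  simpa [nuHom] using h

lemma nuP_inv (p : k) {f : RatFunc k} (hf : f ≠ 0) : nuP p f⁻¹ = -nuP p f := by
  simpa using nuP_zpow p hf (-1)

lemma nuP_neg_one (p : k) : nuP p (-1 : RatFunc k) = 0 := by
  simpa using nuP_C p (-1)

lemma nuInf_mul {f g : RatFunc k} (hf : f ≠ 0) (hg : g ≠ 0) :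
    nuInf (f * g) = nuInf f + nuInf g := by
  rw [nuInf, RatFunc.intDegree_mul hf hg, nuInf, nuInf]; ring

lemma nuInf_inv {f : RatFunc k} (hf : f ≠ 0) : nuInf f⁻¹ = -nuInf f := by
  have h := nuInf_mul hf (inv_ne_zero hf)
  rw [mul_inv_cancel₀ hf] at h
  have h1 : nuInf (1 : RatFunc k) = 0 := by simp [nuInf]
  omega

/-- A function of valuation `0` at `p` has neither a zero nor a pole there, because its numerator
and denominator are coprime. -/
lemma eval_eq_lead (p : k) {f : RatFunc k} (hf : f ≠ 0) (h : nuP p f = 0) :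
    RatFunc.eval (RingHom.id k) p f = lead p f := by
  have hn := RatFunc.num_ne_zero hf
  have hd := f.denom_ne_zero
  have key : f.denom.rootMultiplicity p = 0 := by
    by_contra h0
    have hd0 : f.denom.IsRoot p := (rootMultiplicity_pos hd).1 (Nat.pos_of_ne_zero h0)
    have hn0 : f.num.IsRoot p := (rootMultiplicity_pos hn).1 (by unfold nuP at h; omega)
    obtain ⟨a, b, hab⟩ := RatFunc.isCoprime_num_denom f
    have := congrArg (Polynomial.eval p) hab
    simp [hd0.eq_zero, hn0.eq_zero] at this
  have key' : f.num.rootMultiplicity p = 0 := by unfold nuP at h; omega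
  rw [lead_apply, polyLead_eq_eval p key, polyLead_eq_eval p key']
  simp [RatFunc.eval]

/-- The tame symbol in terms of valuations `m`, `n` and leading coefficients `a`, `b`. -/
noncomputable def symb (m : ℤ) (a : k) (n : ℤ) (b : k) : k :=
  (-1) ^ (m * n) * a ^ n * b ^ (-m)

lemma tameAt_eq (p : k) {f g : RatFunc k} (hf : f ≠ 0) (hg : g ≠ 0) :
    tameAt p f g = symb (nuP p f) (lead p f) (nuP p g) (lead p g) := by
  have h1 : (-1 : RatFunc k) ≠ 0 := by simp
  have hneg : lead p (-1) = -1 := by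
    have hC : (-1 : RatFunc k) = algebraMap k[X] (RatFunc k) (C (-1)) := by simp
    rw [lead_apply, hC, RatFunc.num_algebraMap, RatFunc.denom_algebraMap]
    rw [polyLead_eq_eval p (by rw [rootMultiplicity_C]), map_one]; simp
  have h2 := zpow_ne_zero (nuP p f * nuP p g) h1
  have h3 := zpow_ne_zero (nuP p g) hf
  have h4 := zpow_ne_zero (-nuP p f) hg
  rw [tameAt, eval_eq_lead p (mul_ne_zero (mul_ne_zero h2 h3) h4)]
  · simp only [map_mul, map_zpow₀, hneg, symb]
  · rw [nuP_mul p (mul_ne_zero h2 h3) h4, nuP_mul p h2 h3, nuP_zpow p h1, nuP_zpow p hf,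
      nuP_zpow p hg, nuP_neg_one]
    ring

lemma tameInf_eq (f g : RatFunc k) :
    tameInf f g = symb (nuInf f) (leadInf f) (nuInf g) (leadInf g) := by
  have hneg : leadInf (-1 : RatFunc k) = -1 := by
    have hC : (-1 : RatFunc k) = algebraMap k[X] (RatFunc k) (C (-1)) := by simp
    rw [leadInf_apply, hC, RatFunc.num_algebraMap, RatFunc.denom_algebraMap]
    rw [leadingCoeff_C]; simp
  rw [tameInf, ← leadInf_apply]
  simp only [map_mul, map_zpow₀, hneg, symb]

lemma symb_mul {m m' n : ℤ} {a a' b : k} (hb : b ≠ 0) :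
    symb (m + m') (a * a') n b = symb m a n b * symb m' a' n b := by
  have h1 : (-1 : k) ≠ 0 := by simp
  simp only [symb, add_mul, neg_add, zpow_add₀ h1, zpow_add₀ hb, mul_zpow]
  ring

lemma symb_inv (m n : ℤ) (a b : k) :
    symb (-m) a⁻¹ n b = (symb m a n b)⁻¹ := by
  simp [symb, mul_comm]

lemma symb_swap (m n : ℤ) (a b : k) : symb n b m a = (symb m a n b)⁻¹ := by
  simp only [symb, mul_inv, ← zpow_neg, neg_neg]
  rw [zpow_neg, mul_comm n m]
  rcases Int.even_or_odd (m * n) with h | h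
  · simp [h.neg_one_zpow]; ring
  · simp [h.neg_one_zpow]; ring

/-- The reciprocity law for the pair `f`, `g`. -/
def Recip (f g : RatFunc k) : Prop :=
  {p : k | tameAt p f g ≠ 1}.Finite ∧ (∏ᶠ p : k, tameAt p f g) * tameInf f g = 1

lemma Recip.mul {f f' g : RatFunc k} (hf : f ≠ 0) (hf' : f' ≠ 0) (hg : g ≠ 0)
    (h : Recip f g) (h' : Recip f' g) : Recip (f * f') g := by
  have e : ∀ p, tameAt p (f * f') g = tameAt p f g * tameAt p f' g := fun p => by
    rw [tameAt_eq p (mul_ne_zero hf hf') hg, tameAt_eq p hf hg, tameAt_eq p hf' hg,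
      nuP_mul p hf hf', map_mul, symb_mul ((_root_.map_ne_zero _).2 hg)]
  have e' : tameInf (f * f') g = tameInf f g * tameInf f' g := by
    rw [tameInf_eq, tameInf_eq, tameInf_eq, nuInf_mul hf hf', map_mul,
      symb_mul ((_root_.map_ne_zero _).2 hg)]
  refine ⟨(h.1.union h'.1).subset fun p hp => ?_, ?_⟩
  · by_contra hc
    simp only [Set.mem_union, Set.mem_ofPred_eq, not_or, not_not] at hc
    exact hp (by rw [e, hc.1, hc.2, one_mul])
  · simp only [e, e']
    rw [finprod_mul_distrib h.1 h'.1, mul_mul_mul_comm, h.2, h'.2, one_mul]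

lemma Recip.of_inv {f g f' g' : RatFunc k} (h : Recip f g)
    (e : ∀ p, tameAt p f' g' = (tameAt p f g)⁻¹) (e' : tameInf f' g' = (tameInf f g)⁻¹) :
    Recip f' g' := by
  refine ⟨h.1.subset fun p hp hc => hp (by rw [e, hc, inv_one]), ?_⟩
  simp only [e, e']
  rw [finprod_inv_distrib, ← mul_inv, h.2, inv_one]

lemma Recip.inv {f g : RatFunc k} (hf : f ≠ 0) (hg : g ≠ 0) (h : Recip f g) : Recip f⁻¹ g :=
  h.of_inv
    (fun p => by
      rw [tameAt_eq p (inv_ne_zero hf) hg, tameAt_eq p hf hg, nuP_inv p hf, map_inv₀, symb_inv])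
    (by rw [tameInf_eq, tameInf_eq, nuInf_inv hf, map_inv₀, symb_inv])

lemma Recip.swap {f g : RatFunc k} (hf : f ≠ 0) (hg : g ≠ 0) (h : Recip f g) : Recip g f :=
  h.of_inv (fun p => by rw [tameAt_eq p hg hf, tameAt_eq p hf hg, symb_swap])
    (by rw [tameInf_eq, tameInf_eq, symb_swap])

/-- Over an algebraically closed field, `k(X)ˣ` is generated by constants and the `X - a`. -/
lemma generators_induction [IsAlgClosed k] {Q : RatFunc k → Prop}
    (hC : ∀ c : k, c ≠ 0 → Q (algebraMap k[X] (RatFunc k) (C c)))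
    (hX : ∀ a : k, Q (algebraMap k[X] (RatFunc k) (X - C a)))
    (hmul : ∀ f g : RatFunc k, f ≠ 0 → g ≠ 0 → Q f → Q g → Q (f * g))
    (hinv : ∀ f : RatFunc k, f ≠ 0 → Q f → Q f⁻¹) (f : RatFunc k) (hf : f ≠ 0) : Q f := by
  have inj : ∀ {q : k[X]}, q ≠ 0 → algebraMap k[X] (RatFunc k) q ≠ 0 := fun hq =>
    RatFunc.algebraMap_ne_zero hq
  have hprod : ∀ s : Multiset k,
      (s.map fun a => X - C a).prod ≠ 0 ∧
        Q (algebraMap k[X] (RatFunc k) (s.map fun a => X - C a).prod) := by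
    intro s
    induction s using Multiset.induction with
    | empty => exact ⟨by simp, by simpa using hC 1 one_ne_zero⟩
    | cons a s ih =>
      rw [Multiset.map_cons, Multiset.prod_cons, map_mul]
      exact ⟨mul_ne_zero (X_sub_C_ne_zero a) ih.1,
        hmul _ _ (inj (X_sub_C_ne_zero a)) (inj ih.1) (hX a) ih.2⟩
  have hpoly : ∀ q : k[X], q ≠ 0 → Q (algebraMap k[X] (RatFunc k) q) := by
    intro q hq
    have hl : q.leadingCoeff ≠ 0 := leadingCoeff_ne_zero.2 hq
    rw [(IsAlgClosed.splits q).eq_prod_roots, map_mul]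
    exact hmul _ _ (inj (C_ne_zero.2 hl)) (inj (hprod _).1) (hC _ hl) (hprod _).2
  rw [← RatFunc.num_div_denom f, div_eq_mul_inv]
  have hn := RatFunc.num_ne_zero hf
  have hd := f.denom_ne_zero
  exact hmul _ _ (inj hn) (inv_ne_zero (inj hd)) (hpoly _ hn) (hinv _ (inj hd) (hpoly _ hd))

lemma lead_C (p c : k) : lead p (algebraMap k[X] (RatFunc k) (C c)) = c := by
  rw [lead_apply, RatFunc.num_algebraMap, RatFunc.denom_algebraMap,
    polyLead_eq_eval p (by rw [rootMultiplicity_C]), map_one]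
  simp

lemma leadInf_C (c : k) : leadInf (algebraMap k[X] (RatFunc k) (C c)) = c := by
  rw [leadInf_apply, RatFunc.num_algebraMap, RatFunc.denom_algebraMap]; simp

lemma nuInf_C (c : k) : nuInf (algebraMap k[X] (RatFunc k) (C c)) = 0 := by
  simp [nuInf]

lemma nuP_X_sub_C_self (a : k) : nuP a (algebraMap k[X] (RatFunc k) (X - C a)) = 1 := by
  rw [nuP, RatFunc.num_algebraMap, RatFunc.denom_algebraMap, rootMultiplicity_X_sub_C_self]
  simp [← C_1, rootMultiplicity_C, -map_one]

lemma nuP_X_sub_C {p a : k} (h : p ≠ a) :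
    nuP p (algebraMap k[X] (RatFunc k) (X - C a)) = 0 := by
  classical
  rw [nuP, RatFunc.num_algebraMap, RatFunc.denom_algebraMap, rootMultiplicity_X_sub_C, if_neg h]
  simp [← C_1, rootMultiplicity_C, -map_one]

lemma lead_X_sub_C_self (a : k) : lead a (algebraMap k[X] (RatFunc k) (X - C a)) = 1 := by
  have : polyLead a (X - C a) = 1 := by
    change (taylor a (X - C a)).trailingCoeff = 1
    simp [trailingCoeff]
  rw [lead_apply, RatFunc.num_algebraMap, RatFunc.denom_algebraMap, this, map_one, div_one]

lemma lead_X_sub_C {p a : k} (h : p ≠ a) :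
    lead p (algebraMap k[X] (RatFunc k) (X - C a)) = p - a := by
  classical
  rw [lead_apply, RatFunc.num_algebraMap, RatFunc.denom_algebraMap,
    polyLead_eq_eval p (by rw [rootMultiplicity_X_sub_C, if_neg h]), map_one]
  simp

lemma nuInf_X_sub_C (a : k) : nuInf (algebraMap k[X] (RatFunc k) (X - C a)) = -1 := by
  rw [nuInf, RatFunc.intDegree_polynomial, natDegree_X_sub_C]; rfl

lemma leadInf_X_sub_C (a : k) : leadInf (algebraMap k[X] (RatFunc k) (X - C a)) = 1 := by
  rw [leadInf_apply, RatFunc.num_algebraMap, RatFunc.denom_algebraMap]; simp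

lemma alg_C_ne_zero {c : k} (hc : c ≠ 0) : algebraMap k[X] (RatFunc k) (C c) ≠ 0 :=
  RatFunc.algebraMap_ne_zero (C_ne_zero.2 hc)

lemma alg_X_sub_C_ne_zero (a : k) : algebraMap k[X] (RatFunc k) (X - C a) ≠ 0 :=
  RatFunc.algebraMap_ne_zero (X_sub_C_ne_zero a)

/-- To verify the law it is enough to know the symbols on a finite set containing the supports. -/
lemma Recip.of_finset {f g : RatFunc k} (s : Finset k) (h : ∀ p ∉ s, tameAt p f g = 1)
    (hs : (∏ p ∈ s, tameAt p f g) * tameInf f g = 1) : Recip f g := by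
  have hsub : {p : k | tameAt p f g ≠ 1} ⊆ s := fun p hp => by
    by_contra hc
    exact hp (h p (by simpa using hc))
  refine ⟨s.finite_toSet.subset hsub, ?_⟩
  rwa [finprod_eq_prod_of_mulSupport_subset _ hsub]

lemma recip_C_C {c d : k} (hc : c ≠ 0) (hd : d ≠ 0) :
    Recip (algebraMap k[X] (RatFunc k) (C c)) (algebraMap k[X] (RatFunc k) (C d)) := by
  refine .of_finset ∅ (fun p _ => ?_) ?_
  · rw [tameAt_eq p (alg_C_ne_zero hc) (alg_C_ne_zero hd), nuP_C, nuP_C]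
    simp [symb]
  · rw [tameInf_eq, nuInf_C, nuInf_C]
    simp [symb]

lemma recip_C_X {c : k} (hc : c ≠ 0) (b : k) :
    Recip (algebraMap k[X] (RatFunc k) (C c)) (algebraMap k[X] (RatFunc k) (X - C b)) := by
  have e := fun p => tameAt_eq p (alg_C_ne_zero hc) (alg_X_sub_C_ne_zero b)
  refine .of_finset {b} (fun p hp => ?_) ?_
  · rw [e, nuP_C, nuP_X_sub_C (by simpa using hp)]
    simp [symb]
  · rw [Finset.prod_singleton, e, tameInf_eq, nuInf_C, nuP_C, nuInf_X_sub_C, nuP_X_sub_C_self,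
      lead_C, leadInf_C]
    simp [symb, hc]

lemma recip_X_X (a b : k) :
    Recip (algebraMap k[X] (RatFunc k) (X - C a)) (algebraMap k[X] (RatFunc k) (X - C b)) := by
  classical
  have e := fun p => tameAt_eq p (alg_X_sub_C_ne_zero a) (alg_X_sub_C_ne_zero b)
  refine .of_finset {a, b} (fun p hp => ?_) ?_
  · simp only [Finset.mem_insert, Finset.mem_singleton, not_or] at hp
    rw [e, nuP_X_sub_C hp.1, nuP_X_sub_C hp.2]
    simp [symb]
  · rw [tameInf_eq, nuInf_X_sub_C, nuInf_X_sub_C, leadInf_X_sub_C, leadInf_X_sub_C]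
    by_cases hab : a = b
    · subst hab
      rw [Finset.pair_eq_singleton, Finset.prod_singleton, e, nuP_X_sub_C_self, lead_X_sub_C_self]
      simp [symb]
    · rw [Finset.prod_pair hab, e, e, nuP_X_sub_C_self, nuP_X_sub_C_self, nuP_X_sub_C hab,
        nuP_X_sub_C (Ne.symm hab), lead_X_sub_C hab, lead_X_sub_C (Ne.symm hab),
        lead_X_sub_C_self, lead_X_sub_C_self]
      have h : a - b ≠ 0 := sub_ne_zero.2 hab
      simp [symb]
      field_simp
      ring

end WeilP1

open WeilP1

/-- Weil reciprocity for the projective line over an algebraically closed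
field: for `f, g ∈ k(X)ˣ`, all but finitely many tame symbols `{f,g}_p` equal `1` and
the product over all points of `ℙ¹(k)` (including `∞`) equals `1`. -/
theorem weil_reciprocity_P1 {k : Type*} [Field k] [IsAlgClosed k]
    (f g : RatFunc k) (hf : f ≠ 0) (hg : g ≠ 0) :
    {p : k | tameAt p f g ≠ 1}.Finite ∧
      (∏ᶠ p : k, tameAt p f g) * tameInf f g = 1 := by
  change Recip f g
  refine generators_induction (Q := fun f => Recip f g) (fun c hc => ?_) (fun a => ?_)
    (fun _ _ h h' => .mul h h' hg) (fun _ h => .inv h hg) f hf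
  -- With `f` a generator, reduce `g` to a generator through the antisymmetry of the symbol.
  · refine Recip.swap hg (alg_C_ne_zero hc) ?_
    exact generators_induction (Q := fun g => Recip g _)
      (fun d hd => recip_C_C hd hc)
      (fun b => (recip_C_X hc b).swap (alg_C_ne_zero hc) (alg_X_sub_C_ne_zero b))
      (fun _ _ h h' => .mul h h' (alg_C_ne_zero hc))
      (fun _ h => .inv h (alg_C_ne_zero hc)) g hg
  · refine Recip.swap hg (alg_X_sub_C_ne_zero a) ?_
    exact generators_induction (Q := fun g => Recip g _)
      (fun d hd => recip_C_X hd a) (fun b => recip_X_X b a)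
      (fun _ _ h h' => .mul h h' (alg_X_sub_C_ne_zero a))
      (fun _ h => .inv h (alg_X_sub_C_ne_zero a)) g hg
end

section
/- The two-dimensional tame symbol on 𝕂 = k'((t))((s)) is trimultiplicative: {f₁f₂, g, h} = {f₁,g,h}·{f₂,g,h}, and similarly in each argument. -/
/-! The two-dimensional local field `𝕂 = k'((t))((s))`, realized as iterated Laurent
series `LaurentSeries (LaurentSeries k')`. Here `ν₁` is the `s`-adic valuation (the
order of the outer Hahn series), with residue field `K = k'((t))` (residue of an
order-`0` element is its `0`-th coefficient), and `ν₂` is the `t`-adic valuation on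
`K`, with residue field `k'`. -/

/-- `𝕂 = k'((t))((s))`. -/
abbrev LL (k' : Type*) [Field k'] := LaurentSeries (LaurentSeries k')

variable {k' : Type*} [Field k']

/-- The `s`-adic valuation `ν₁` on `𝕂`. -/
noncomputable def nu1 (f : LL k') : ℤ := HahnSeries.order f

/-- Residue map `𝕂 → K = k'((t))` (on elements of `ν₁ ≥ 0`, the `0`-th coefficient). -/
noncomputable def res1 (f : LL k') : LaurentSeries k' := f.coeff 0

/-- The `t`-adic valuation `ν₂` on `K = k'((t))`. -/
noncomputable def nu2 (f : LaurentSeries k') : ℤ := HahnSeries.order f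

/-- Residue map `K = k'((t)) → k'`. -/
noncomputable def res2 (f : LaurentSeries k') : k' := f.coeff 0

/-- `ν_𝕂(f,g) := ν₂( residue of f^(ν₁ g) · g^(-ν₁ f) )`. -/
noncomputable def nuKK (f g : LL k') : ℤ := nu2 (res1 (f ^ nu1 g * g ^ (-nu1 f)))

/-- The two-dimensional tame symbol
`{f,g,h} = (-1)^A · ( f^(ν_𝕂(g,h)) g^(ν_𝕂(h,f)) h^(ν_𝕂(f,g)) mod π_𝕂 mod π_K )`, with
`A = ν_𝕂(f,g)ν_𝕂(f,h) + ν_𝕂(g,h)ν_𝕂(g,f) + ν_𝕂(h,f)ν_𝕂(h,g) + ν_𝕂(f,g)ν_𝕂(g,h)ν_𝕂(h,f)`. -/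
noncomputable def tameSymbol2 (f g h : LL k') : k' :=
  (-1 : k') ^ (nuKK f g * nuKK f h + nuKK g h * nuKK g f + nuKK h f * nuKK h g
      + nuKK f g * nuKK g h * nuKK h f)
    * res2 (res1 (f ^ nuKK g h * g ^ nuKK h f * h ^ nuKK f g))

/-- The element `s ∈ 𝕂 = k'((t))((s))`. -/
noncomputable def sVar (k' : Type*) [Field k'] : LL k' := HahnSeries.single (1 : ℤ) 1

/-! The idea is to express the symbol through three multiplicative invariants of a nonzero
`f ∈ 𝕂`: the valuation `a_f = ν₁ f`, the valuation `b_f = ν₂ (lc f)` of the leading coefficient in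
`K`, and the double leading coefficient `c_f ∈ k'ˣ`. The residue of a series of order `0` is its
leading coefficient, which is multiplicative, so `ν_𝕂(f,g) = b_f a_g - b_g a_f`
(`nuKK_eq`) is a `2 × 2` determinant, hence biadditive. The element
`f ^ ν_𝕂(g,h) * g ^ ν_𝕂(h,f) * h ^ ν_𝕂(f,g)` has order `0` for both valuations, because a `3 × 3`
determinant with a repeated row vanishes; its residue in `k'` is therefore
`c_f ^ ν_𝕂(g,h) * c_g ^ ν_𝕂(h,f) * c_h ^ ν_𝕂(f,g)`, which is multiplicative in `f`.

There remains the sign. With `x = ν_𝕂(f,g)`, `y = ν_𝕂(f,h)`, `z = ν_𝕂(g,h)`, the exponent `A` is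
congruent mod `2` to `x y (1 + z) + z (x + y)`. If `z` is odd this is additive in `f`. If `z` is
even, the vectors `(a_g, b_g)` and `(a_h, b_h)` are linearly dependent mod `2`, so one of `x`, `y`,
`x + y` vanishes mod `2`, the same one for every `f`, and `x y` is again additive (`even_sign_defect`). The
symbol is invariant under cyclic permutations, so multiplicativity in the first argument
suffices. -/

section Laurent

variable {F : Type*} [Field F]

/-- The leading coefficient of a Laurent series over a field, as a multiplicative map. -/
noncomputable def leadHom (F : Type*) [Field F] : LaurentSeries F →*₀ F where
  toFun f := f.leadingCoeff
  map_zero' := HahnSeries.leadingCoeff_zero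
  map_one' := HahnSeries.leadingCoeff_one
  map_mul' f g := HahnSeries.leadingCoeff_mul f g

lemma leadHom_ne_zero {f : LaurentSeries F} (hf : f ≠ 0) : leadHom F f ≠ 0 :=
  HahnSeries.leadingCoeff_ne_zero.2 hf

lemma coeff_zero_eq_leadHom {f : LaurentSeries F} (hf : f.order = 0) :
    f.coeff 0 = leadHom F f := by
  change _ = f.leadingCoeff
  rw [HahnSeries.leadingCoeff_eq, hf]

lemma laurent_order_zpow {f : LaurentSeries F} (hf : f ≠ 0) (n : ℤ) :
    (f ^ n).order = n * f.order := by
  induction n using Int.induction_on with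
  | zero => simp
  | succ n ih =>
    rw [zpow_add_one₀ hf, HahnSeries.order_mul (zpow_ne_zero _ hf) hf, ih]
    ring
  | pred n ih =>
    have h := HahnSeries.order_mul (zpow_ne_zero (-(n : ℤ) - 1) hf) hf
    rw [← zpow_add_one₀ hf, sub_add_cancel, ih] at h
    linarith

end Laurent

/-- The `t`-adic valuation of the leading coefficient of `f`; together with `nu1` it makes up the
rank-two valuation of `𝕂`. -/
noncomputable def nuLead (f : LL k') : ℤ := (leadHom (LaurentSeries k') f).order

/-- The double leading coefficient: the leading coefficient in `k'` of the leading coefficient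
in `K`. -/
noncomputable def leadLead (k' : Type*) [Field k'] : LL k' →*₀ k' :=
  (leadHom k').comp (leadHom (LaurentSeries k'))

lemma leadLead_ne_zero {f : LL k'} (hf : f ≠ 0) : leadLead k' f ≠ 0 :=
  leadHom_ne_zero (leadHom_ne_zero hf)

lemma nu1_mul {f g : LL k'} (hf : f ≠ 0) (hg : g ≠ 0) : nu1 (f * g) = nu1 f + nu1 g :=
  HahnSeries.order_mul hf hg

lemma nuLead_mul {f g : LL k'} (hf : f ≠ 0) (hg : g ≠ 0) :
    nuLead (f * g) = nuLead f + nuLead g := by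
  unfold nuLead
  rw [map_mul]
  exact HahnSeries.order_mul (leadHom_ne_zero hf) (leadHom_ne_zero hg)

lemma nu1_zpow {f : LL k'} (hf : f ≠ 0) (n : ℤ) : nu1 (f ^ n) = n * nu1 f :=
  laurent_order_zpow hf n

lemma nuLead_zpow {f : LL k'} (hf : f ≠ 0) (n : ℤ) : nuLead (f ^ n) = n * nuLead f := by
  unfold nuLead
  rw [map_zpow₀]
  exact laurent_order_zpow (leadHom_ne_zero hf) n

lemma nuKK_eq {f g : LL k'} (hf : f ≠ 0) (hg : g ≠ 0) :
    nuKK f g = nuLead f * nu1 g - nuLead g * nu1 f := by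
  have h0 : (f ^ nu1 g * g ^ (-nu1 f)).order = 0 := by
    change nu1 _ = 0
    rw [nu1_mul (zpow_ne_zero _ hf) (zpow_ne_zero _ hg), nu1_zpow hf, nu1_zpow hg]
    ring
  unfold nuKK res1
  rw [coeff_zero_eq_leadHom h0]
  change nuLead _ = _
  rw [nuLead_mul (zpow_ne_zero _ hf) (zpow_ne_zero _ hg), nuLead_zpow hf, nuLead_zpow hg]
  ring

lemma res2_res1_eq_leadLead {u : LL k'} (h1 : nu1 u = 0) (h2 : nuLead u = 0) :
    res2 (res1 u) = leadLead k' u := by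
  unfold res2 res1
  rw [coeff_zero_eq_leadHom h1, coeff_zero_eq_leadHom h2]
  rfl

/-- The residue factor of the symbol, in terms of double leading coefficients: both valuations of
the product vanish by `nuKK_eq`. -/
lemma res_tame_eq {f g h : LL k'} (hf : f ≠ 0) (hg : g ≠ 0) (hh : h ≠ 0) :
    res2 (res1 (f ^ nuKK g h * g ^ nuKK h f * h ^ nuKK f g)) =
      leadLead k' f ^ nuKK g h * leadLead k' g ^ nuKK h f * leadLead k' h ^ nuKK f g := by
  have hf' := zpow_ne_zero (nuKK g h) hf
  have hg' := zpow_ne_zero (nuKK h f) hg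
  have hh' := zpow_ne_zero (nuKK f g) hh
  rw [res2_res1_eq_leadLead]
  · simp only [map_mul, map_zpow₀]
  · rw [nu1_mul (mul_ne_zero hf' hg') hh', nu1_mul hf' hg', nu1_zpow hf, nu1_zpow hg,
      nu1_zpow hh, nuKK_eq hf hg, nuKK_eq hg hh, nuKK_eq hh hf]
    ring
  · rw [nuLead_mul (mul_ne_zero hf' hg') hh', nuLead_mul hf' hg', nuLead_zpow hf, nuLead_zpow hg,
      nuLead_zpow hh, nuKK_eq hf hg, nuKK_eq hg hh, nuKK_eq hh hf]
    ring

/-- The exponent of the sign, in terms of `x = ν_𝕂(f,g)`, `y = ν_𝕂(g,h)`, `z = ν_𝕂(h,f)`; the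
antisymmetry of `ν_𝕂` has been used to express the remaining values. -/
def signExp (x y z : ℤ) : ℤ := x * -z + y * -x + z * -y + x * y * z

/-- The sign exponent is additive mod `2` in the first argument. Here `(aᵢ, bᵢ)`, `(c, d)`,
`(p, q)` are the rank-two valuations of `fᵢ`, `g`, `h`. -/
lemma even_sign_defect (a₁ b₁ a₂ b₂ c d p q : ℤ) :
    Even (signExp ((b₁ * c - d * a₁) + (b₂ * c - d * a₂)) (d * p - q * c)
        ((q * a₁ - b₁ * p) + (q * a₂ - b₂ * p))
      - (signExp (b₁ * c - d * a₁) (d * p - q * c) (q * a₁ - b₁ * p)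
        + signExp (b₂ * c - d * a₂) (d * p - q * c) (q * a₂ - b₂ * p))) := by
  unfold signExp
  rw [← ZMod.intCast_eq_zero_iff_even]
  push_cast
  generalize (a₁ : ZMod 2) = a₁, (b₁ : ZMod 2) = b₁, (a₂ : ZMod 2) = a₂, (b₂ : ZMod 2) = b₂,
    (c : ZMod 2) = c, (d : ZMod 2) = d, (p : ZMod 2) = p, (q : ZMod 2) = q
  revert a₁ b₁ a₂ b₂ c d p q
  decide

lemma tameSymbol2_eq {f g h : LL k'} (hf : f ≠ 0) (hg : g ≠ 0) (hh : h ≠ 0) :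
    tameSymbol2 f g h = (-1 : k') ^ signExp (nuKK f g) (nuKK g h) (nuKK h f) *
      (leadLead k' f ^ nuKK g h * leadLead k' g ^ nuKK h f * leadLead k' h ^ nuKK f g) := by
  have anti {u v : LL k'} (hu : u ≠ 0) (hv : v ≠ 0) : nuKK u v = -nuKK v u := by
    rw [nuKK_eq hu hv, nuKK_eq hv hu]
    ring
  unfold tameSymbol2 signExp
  rw [res_tame_eq hf hg hh, anti hf hh, anti hg hf, anti hh hg]

lemma tameSymbol2_mul_left (f₁ f₂ g h : LL k')
    (hf₁ : f₁ ≠ 0) (hf₂ : f₂ ≠ 0) (hg : g ≠ 0) (hh : h ≠ 0) :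
    tameSymbol2 (f₁ * f₂) g h = tameSymbol2 f₁ g h * tameSymbol2 f₂ g h := by
  have hf := mul_ne_zero hf₁ hf₂
  have e1 : nuKK (f₁ * f₂) g = nuKK f₁ g + nuKK f₂ g := by
    rw [nuKK_eq hf hg, nuKK_eq hf₁ hg, nuKK_eq hf₂ hg, nu1_mul hf₁ hf₂, nuLead_mul hf₁ hf₂]
    ring
  have e2 : nuKK h (f₁ * f₂) = nuKK h f₁ + nuKK h f₂ := by
    rw [nuKK_eq hh hf, nuKK_eq hh hf₁, nuKK_eq hh hf₂, nu1_mul hf₁ hf₂, nuLead_mul hf₁ hf₂]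
    ring
  have sgn : (-1 : k') ^ signExp (nuKK f₁ g + nuKK f₂ g) (nuKK g h) (nuKK h f₁ + nuKK h f₂) =
      (-1 : k') ^ signExp (nuKK f₁ g) (nuKK g h) (nuKK h f₁) *
        (-1 : k') ^ signExp (nuKK f₂ g) (nuKK g h) (nuKK h f₂) := by
    have hne : (-1 : k') ≠ 0 := neg_ne_zero.2 one_ne_zero
    have ev := even_sign_defect (nu1 f₁) (nuLead f₁) (nu1 f₂) (nuLead f₂) (nu1 g) (nuLead g)
      (nu1 h) (nuLead h)
    rw [← nuKK_eq hf₁ hg, ← nuKK_eq hf₂ hg, ← nuKK_eq hg hh, ← nuKK_eq hh hf₁,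
      ← nuKK_eq hh hf₂] at ev
    rw [← zpow_add₀ hne, ← div_eq_one_iff_eq (zpow_ne_zero _ hne), ← zpow_sub₀ hne,
      ev.neg_one_zpow]
  rw [tameSymbol2_eq hf hg hh, tameSymbol2_eq hf₁ hg hh, tameSymbol2_eq hf₂ hg hh, e1, e2, sgn,
    map_mul, mul_zpow, zpow_add₀ (leadLead_ne_zero hg), zpow_add₀ (leadLead_ne_zero hh)]
  ring

lemma tameSymbol2_cyclic (f g h : LL k') : tameSymbol2 f g h = tameSymbol2 g h f := by
  unfold tameSymbol2
  congr 2
  · ring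
  · congr 1
    ring

/-- the two-dimensional tame symbol on `𝕂 = k'((t))((s))` is
trimultiplicative in each argument. -/
theorem tame2_trimultiplicative (f₁ f₂ g h : LL k')
    (hf₁ : f₁ ≠ 0) (hf₂ : f₂ ≠ 0) (hg : g ≠ 0) (hh : h ≠ 0) :
    tameSymbol2 (f₁ * f₂) g h = tameSymbol2 f₁ g h * tameSymbol2 f₂ g h ∧
    tameSymbol2 g (f₁ * f₂) h = tameSymbol2 g f₁ h * tameSymbol2 g f₂ h ∧
    tameSymbol2 g h (f₁ * f₂) = tameSymbol2 g h f₁ * tameSymbol2 g h f₂ := by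
  have key (g h : LL k') (hg : g ≠ 0) (hh : h ≠ 0) :=
    tameSymbol2_mul_left f₁ f₂ g h hf₁ hf₂ hg hh
  refine ⟨key g h hg hh, ?_, ?_⟩
  · simpa only [tameSymbol2_cyclic g] using key h g hh hg
  · simpa only [← tameSymbol2_cyclic _ g h] using key g h hg hh
end
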